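/- Let E, N be positive, α > 0, D > 0, K > 0, and let p : ℕ → ℝ be defined by p(c) = K/c for c ≥ 1. Then for every c ≥ 2 the right-hand side of the master equation evaluated at p, namely R(c) = (D/E)[(c+1)p(c+1) − c p(c)] + (2D/(2E+Nα))[(c−1+α)p(c−1) − (c+α)p(c)], satisfies: the edge-removal term vanishes exactly, (c+1)p(c+1) − c p(c) = 0, and R(c) = 2 D K α / ((2E + Nα) c (c−1)). In particular, for each fixed c ≥ 2, R(c) → 0 as α → 0⁺, so the power-law profile p(c) = K/c is a stationary solution of the master equation in the limit of vanishing attraction coefficient α. -/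

import Mathlib

/-- **The power law `p(c) = K/c` is stationary for the master equation in the limit of
vanishing attraction coefficient.** Let `E, N > 0`, `D > 0`, `K > 0` and let
`p(c) = K/c` for `c ≥ 1`. For `α > 0` let
`R α c = (D/E)[(c+1)p(c+1) − c p(c)] + (2D/(2E+Nα))[(c−1+α)p(c−1) − (c+α)p(c)]`
be the right-hand side of the master equation evaluated at `p`. Then for every `c ≥ 2`:
the edge-removal term vanishes exactly, `(c+1)p(c+1) − c p(c) = 0`; the residual equals
`R α c = 2DKα/((2E+Nα) c (c−1))` for every `α > 0`; and `R α c → 0` as `α → 0⁺`. -/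
theorem power_law_stationary_vanishing_attraction
    (E N D K : ℝ) (hE : 0 < E) (hN : 0 < N) (hD : 0 < D) (hK : 0 < K)
    (p : ℕ → ℝ) (hp : ∀ c : ℕ, 1 ≤ c → p c = K / (c : ℝ))
    (R : ℝ → ℕ → ℝ)
    (hR : ∀ (α : ℝ), 0 < α → ∀ (c : ℕ), 2 ≤ c →
      R α c = D / E * (((c : ℝ) + 1) * p (c + 1) - (c : ℝ) * p c)
        + 2 * D / (2 * E + N * α)
            * (((c : ℝ) - 1 + α) * p (c - 1) - ((c : ℝ) + α) * p c)) :
    ∀ c : ℕ, 2 ≤ c →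
      (((c : ℝ) + 1) * p (c + 1) - (c : ℝ) * p c = 0) ∧
      (∀ α : ℝ, 0 < α →
        R α c = 2 * D * K * α / ((2 * E + N * α) * (c : ℝ) * ((c : ℝ) - 1))) ∧
      Filter.Tendsto (fun α => R α c) (nhdsWithin 0 (Set.Ioi 0)) (nhds 0) := by
  intro c hc
  have hc2 : (2 : ℝ) ≤ (c : ℝ) := by exact_mod_cast hc
  have hc0 : (c : ℝ) ≠ 0 := by linarith
  have hc1 : (c : ℝ) - 1 ≠ 0 := by
    intro h
    linarith
  have hcp : (c : ℝ) + 1 ≠ 0 := by linarith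
  have h1 : ((c : ℝ) + 1) * p (c + 1) - (c : ℝ) * p c = 0 := by
    rw [hp (c + 1) (by omega), hp c (by omega)]
    push_cast
    field_simp
    ring
  have h2 : ∀ α : ℝ, 0 < α →
      R α c = 2 * D * K * α / ((2 * E + N * α) * (c : ℝ) * ((c : ℝ) - 1)) := by
    intro α hα
    have hd : 2 * E + N * α ≠ 0 := by positivity
    rw [hR α hα c hc, h1, hp (c - 1) (by omega), hp c (by omega),
      Nat.cast_sub (by omega : 1 ≤ c), Nat.cast_one]
    field_simp
    ring
  refine ⟨h1, h2, ?_⟩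
  have hcont : ContinuousAt
      (fun α : ℝ => 2 * D * K * α / ((2 * E + N * α) * (c : ℝ) * ((c : ℝ) - 1))) 0 := by
    apply ContinuousAt.div (by fun_prop) (by fun_prop)
    have : 2 * E + N * 0 ≠ 0 := by linarith
    exact mul_ne_zero (mul_ne_zero this hc0) hc1
  have ht := hcont.tendsto
  simp only [mul_zero, zero_div] at ht
  refine (ht.mono_left nhdsWithin_le_nhds).congr' ?_
  filter_upwards [self_mem_nhdsWithin] with α hα
  exact (h2 α hα).symm
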